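/- Let T be a string of length n ≥ 2 over a linearly ordered alphabet Σ whose last character occurs exactly once in T. Let γ be the minimum cardinality of a string attractor for T, χ the minimum cardinality of a suffixient set for T, and r̄ the number of runs of BWT(reverse(T)). Then γ ≤ χ ≤ 2·r̄. -/

import Mathlib

/-- The 1-based (inclusive) substring `T[i..j]` of a string `T`. -/
def Substr {A : Type*} (T : List A) (i j : ℕ) : List A := (T.take j).drop (i - 1)

/-- A string `w` (possibly empty) is right-maximal in `T` if there are two distinct
characters `c ≠ c'` such that both `w·c` and `w·c'` occur (as substrings) in `T`. -/
def RightMaximal {A : Type*} (T w : List A) : Prop :=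
  ∃ c c' : A, c ≠ c' ∧ (w ++ [c]) <:+: T ∧ (w ++ [c']) <:+: T

/-- `S ⊆ {1,…,n}` is suffixient for `T` if for every right-maximal string `w` in `T`
and every character `c` such that `w·c` occurs in `T`, there is `s ∈ S` such that
`w·c` is a suffix of `T[1..s]`. -/
def IsSuffixient {A : Type*} (T : List A) (S : Finset ℕ) : Prop :=
  (∀ s ∈ S, 1 ≤ s ∧ s ≤ T.length) ∧
  ∀ (w : List A) (c : A), RightMaximal T w → (w ++ [c]) <:+: T →
    ∃ s ∈ S, (w ++ [c]) <:+ T.take s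

/-- The rotation start offsets `0, …, n−1` of `W`, sorted so that the corresponding
cyclic rotations of `W` are in (non-decreasing, hence for distinct rotations increasing)
lexicographic order.  The `j`-th (1-based) lexicographically smallest rotation of `W`
is `W.rotate ((sortedRotIdx W).getD (j-1) 0)`. -/
def sortedRotIdx {A : Type*} [LinearOrder A] (W : List A) : List ℕ :=
  List.insertionSort (fun a b => W.rotate a ≤ W.rotate b) (List.range W.length)

/-- The Burrows–Wheeler transform of `W`: the `j`-th entry is the last character of the
`j`-th lexicographically smallest cyclic rotation of `W` (as an `Option`, which is
always `some` when `W` is nonempty). -/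
def BWT {A : Type*} [LinearOrder A] (W : List A) : List (Option A) :=
  (sortedRotIdx W).map (fun k => (W.rotate k).getLast?)

/-- The number of runs (maximal blocks of consecutive equal characters) of a string. -/
def runsCount {B : Type*} [DecidableEq B] (L : List B) : ℕ :=
  (L.destutter (· ≠ ·)).length

/-- `j` (1-based) is the first or the last position of some run of `L`. -/
def IsRunBoundary {B : Type*} (L : List B) (j : ℕ) : Prop :=
  1 ≤ j ∧ j ≤ L.length ∧
    (j = 1 ∨ L[j-2]? ≠ L[j-1]? ∨ j = L.length ∨ L[j-1]? ≠ L[j]?)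

instance {B : Type*} [DecidableEq B] (L : List B) : DecidablePred (IsRunBoundary L) :=
  fun j => by unfold IsRunBoundary; infer_instance

/-- If the `j`-th (1-based) lexicographically smallest rotation of `W = reverse T`
starts at (1-based) index `i` of `W`, then `pos(j) = 1` if `i = 1` and
`pos(j) = n − i + 2` otherwise; with this definition `T[pos(j)]` is the `j`-th
character of `BWT W`. -/
def posOf {A : Type*} [LinearOrder A] (W : List A) (j : ℕ) : ℕ :=
  if (sortedRotIdx W).getD (j-1) 0 = 0 then 1
  else W.length - (sortedRotIdx W).getD (j-1) 0 + 1

/-- `Γ ⊆ {1,…,n}` is a string attractor for `T` if every substring `T[i..j]` has an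
occurrence `T[i'..j']` crossing a position of `Γ`. -/
def IsAttractor {A : Type*} (T : List A) (Γ : Finset ℕ) : Prop :=
  (∀ s ∈ Γ, 1 ≤ s ∧ s ≤ T.length) ∧
  ∀ i j, 1 ≤ i → i ≤ j → j ≤ T.length →
    ∃ i' j', 1 ≤ i' ∧ i' ≤ j' ∧ j' ≤ T.length ∧
      Substr T i' j' = Substr T i j ∧ ∃ s ∈ Γ, i' ≤ s ∧ s ≤ j'

/-! The first inequality holds because every suffixient set `S` is an attractor: by induction
on its length, a factor `wc` of `T` has an occurrence meeting `S`.  If `w` is right-maximal this is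
suffixiency; otherwise every occurrence of `w` is followed by `c`, since the unique last character
keeps `w` from being a suffix of `T`.

For the second inequality, an occurrence of `wc` in `T` is a rotation of `T.reverse` with prefix
`w.reverse` and last character `c`.  Conversely, such a rotation comes from an occurrence of `wc`,
as `w.reverse` does not contain the unique character and so does not wrap around the end of
`T.reverse`.  The rotations with a given prefix form an interval of the sorted list, so if `w` is
right-maximal, the interval of `w.reverse` contains two distinct Burrows–Wheeler characters, and
hence, for each character occurring in it, a rotation at the border of a run of that character.
The text positions of these rotations form a suffixient set. -/

section Factors

variable {A : Type*} {T w : List A} {c c' e : A}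

theorem infix_of_concat_infix_concat (h : w ++ [c] <:+: T ++ [e]) : w <:+: T := by
  rcases List.infix_concat_iff.1 h with h | h
  · exact ((List.suffix_append_inj_of_length_eq (s₁ := [c]) (s₂ := [e]) rfl).1 h).1.isInfix
  · exact (List.prefix_append w [c]).isInfix.trans h

theorem notMem_of_concat_infix_concat (he : e ∉ T) (h : w ++ [c] <:+: T ++ [e]) : e ∉ w :=
  fun hew => he ((infix_of_concat_infix_concat h).subset hew)

theorem prefix_of_prefix_append_cons {x y : List A} (h : w <+: x ++ e :: y) (he : e ∉ w) :
    w <+: x := by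
  rcases List.prefix_or_prefix_of_prefix h (List.prefix_append x (e :: y)) with hwx | ⟨t, rfl⟩
  · exact hwx
  · rcases List.prefix_cons_iff.1 ((List.prefix_append_right_inj x).1 h) with rfl | ⟨t, rfl, -⟩
    · simp
    · simp at he

theorem rightMaximal_nil (he : e ∉ T) (hT : T ≠ []) : RightMaximal (T ++ [e]) [] := by
  obtain ⟨x, l, rfl⟩ := List.exists_cons_of_ne_nil hT
  exact ⟨x, e, fun hxe => he (by simp [hxe]), ⟨[], l ++ [e], by simp⟩, ⟨x :: l, [], by simp⟩⟩

theorem RightMaximal.exists_ne (h : RightMaximal T w) (c : A) :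
    ∃ c', c ≠ c' ∧ w ++ [c'] <:+: T := by
  obtain ⟨a, b, hab, ha, hb⟩ := h
  by_cases hca : c = a
  · exact ⟨b, hca ▸ hab, hb⟩
  · exact ⟨a, hca, ha⟩

theorem eq_of_not_rightMaximal (h : ¬RightMaximal T w) (hc : w ++ [c] <:+: T)
    (hc' : w ++ [c'] <:+: T) : c = c' :=
  by_contra fun hne => h ⟨c, c', hne, hc, hc'⟩

end Factors

section Attractors

variable {A : Type*} {T T' w β : List A} {S : Finset ℕ} {c e : A} {s : ℕ}

/-- Some occurrence of `β` in `T` contains a (1-based) position of `S`.  The occurrence is given by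
the factors `u` and `v` surrounding it, so that it covers the positions `|u| + 1, …, |u| + |β|`. -/
def OccursAcross (T : List A) (S : Finset ℕ) (β : List A) : Prop :=
  ∃ u v, T = u ++ β ++ v ∧ ∃ s ∈ S, u.length < s ∧ s ≤ u.length + β.length

theorem occursAcross_of_suffix_take (hs : s ∈ S) (hsT : s ≤ T.length) (hβ : β ≠ [])
    (h : β <:+ T.take s) : OccursAcross T S β := by
  obtain ⟨u, hu⟩ := h
  have hlen : u.length + β.length = s := by
    rw [← List.length_append, hu, List.length_take_of_le hsT]
  have := List.length_pos_iff.2 hβ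
  exact ⟨u, T.drop s, by rw [hu, List.take_append_drop], s, hs, by lia, by lia⟩

theorem OccursAcross.concat (hw : OccursAcross (T' ++ [e]) S w) (hw₀ : w ≠ []) (he : e ∉ T')
    (hmax : ¬RightMaximal (T' ++ [e]) w) (hwc : w ++ [c] <:+: T' ++ [e]) :
    OccursAcross (T' ++ [e]) S (w ++ [c]) := by
  obtain ⟨u, v, huv, s, hs, hus, hsw⟩ := hw
  have hew : e ∉ w := notMem_of_concat_infix_concat he hwc
  rcases v with _ | ⟨c', v⟩
  · have hlast : (T' ++ [e]).getLast? = w.getLast? := by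
      rw [huv, List.append_nil, List.getLast?_append_of_ne_nil u hw₀]
    rw [List.getLast?_concat] at hlast
    exact absurd (List.mem_of_getLast? hlast.symm) hew
  · obtain rfl : c = c' := eq_of_not_rightMaximal hmax hwc ⟨u, v, by simp [huv]⟩
    exact ⟨u, v, by simp [huv], s, hs, hus, by simp; lia⟩

theorem IsSuffixient.occursAcross (hS : IsSuffixient (T' ++ [e]) S) (he : e ∉ T') (hT' : T' ≠ [])
    (hβ : β ≠ []) (hβT : β <:+: T' ++ [e]) : OccursAcross (T' ++ [e]) S β := by
  induction β using List.reverseRecOn with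
  | nil => exact absurd rfl hβ
  | append_singleton w c ih =>
    by_cases hmax : RightMaximal (T' ++ [e]) w
    · obtain ⟨s, hs, hsuffix⟩ := hS.2 w c hmax hβT
      exact occursAcross_of_suffix_take hs (hS.1 s hs).2 hβ hsuffix
    · have hw₀ : w ≠ [] := by
        rintro rfl
        exact hmax (rightMaximal_nil he hT')
      have hwT : w <:+: T' ++ [e] := (List.prefix_append w [c]).isInfix.trans hβT
      exact (ih hw₀ hwT).concat hw₀ he hmax hβT

theorem isAttractor_of_occursAcross (hS : ∀ s ∈ S, 1 ≤ s ∧ s ≤ T.length)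
    (h : ∀ β, β ≠ [] → β <:+: T → OccursAcross T S β) : IsAttractor T S := by
  refine ⟨hS, fun i j hi hij hj => ?_⟩
  have hlen : (Substr T i j).length = j - (i - 1) := by
    rw [Substr, List.length_drop, List.length_take_of_le hj]
  have hne : Substr T i j ≠ [] := List.ne_nil_of_length_pos (by lia)
  have hinfix : Substr T i j <:+: T :=
    (List.drop_suffix _ _).isInfix.trans (List.take_prefix _ _).isInfix
  obtain ⟨u, v, huv, s, hs, hus, hsu⟩ := h _ hne hinfix
  have hlenT := congrArg List.length huv
  simp only [List.length_append] at hlenT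
  refine ⟨u.length + 1, u.length + (Substr T i j).length, by lia, by lia, by lia, ?_, s, hs,
    hus, hsu⟩
  generalize Substr T i j = β at huv
  rw [Substr, huv, ← List.length_append, List.take_left, Nat.add_sub_cancel, List.drop_left]

theorem IsSuffixient.isAttractor (hS : IsSuffixient (T' ++ [e]) S) (he : e ∉ T') (hT' : T' ≠ []) :
    IsAttractor (T' ++ [e]) S :=
  isAttractor_of_occursAcross hS.1 fun _ => hS.occursAcross he hT'

end Attractors

section Runs

variable {X B : Type*} [DecidableEq B] {f : X → B} {l l₁ l₂ : List X} {x y : X}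

theorem runsCount_cons_cons (a b : B) (l : List B) :
    runsCount (a :: b :: l) = runsCount (b :: l) + if a = b then 0 else 1 := by
  by_cases h : a = b <;> simp [runsCount, List.destutter_cons', h]

/-- The elements of `l` at the borders between consecutive runs of `l.map f`: both members of every
adjacent pair on which `f` changes, in order.  An element forming a run by itself is listed once
for each neighbour. -/
def runBoundaries (f : X → B) : List X → List X
  | [] => []
  | [_] => []
  | a :: b :: l =>
    if f a = f b then runBoundaries f (b :: l) else a :: b :: runBoundaries f (b :: l)

theorem length_runBoundaries_add_two (f : X → B) (hl : l ≠ []) :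
    (runBoundaries f l).length + 2 = 2 * runsCount (l.map f) := by
  induction l with
  | nil => exact absurd rfl hl
  | cons a l ih =>
    cases l with
    | nil => simp [runBoundaries, runsCount]
    | cons b l =>
      have ih := ih (List.cons_ne_nil b l)
      rw [List.map_cons] at ih
      rw [List.map_cons, List.map_cons, runsCount_cons_cons, runBoundaries]
      split_ifs
      · exact ih
      · simp only [List.length_cons]
        lia

theorem mem_runBoundaries :
    x ∈ runBoundaries f l ↔ ∃ y, f x ≠ f y ∧ ([x, y] <:+: l ∨ [y, x] <:+: l) := by
  induction l with
  | nil => simp [runBoundaries]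
  | cons a l ih =>
    cases l with
    | nil => simp [runBoundaries, List.infix_cons_iff, List.prefix_cons_iff]
    | cons b l =>
      rw [runBoundaries]
      have hcons (u v : X) :
          [u, v] <:+: a :: b :: l ↔ (u = a ∧ v = b) ∨ [u, v] <:+: b :: l := by
        simp [List.infix_cons_iff (l₂ := b :: l)]
      simp only [hcons]
      split_ifs <;> grind

theorem runBoundaries_subset (f : X → B) (l : List X) : runBoundaries f l ⊆ l := by
  intro x hx
  obtain ⟨y, -, h | h⟩ := mem_runBoundaries.1 hx <;> exact h.subset (by simp)

theorem runBoundaries_subset_of_infix (f : X → B) (h : l₁ <:+: l₂) :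
    runBoundaries f l₁ ⊆ runBoundaries f l₂ := by
  intro x hx
  obtain ⟨y, hxy, hinfix⟩ := mem_runBoundaries.1 hx
  exact mem_runBoundaries.2 ⟨y, hxy, hinfix.imp (·.trans h) (·.trans h)⟩

theorem exists_mem_runBoundaries (hx : x ∈ l) (hy : y ∈ l) (hxy : f x ≠ f y) :
    ∃ z ∈ runBoundaries f l, f z = f x := by
  induction l generalizing x y with
  | nil => simp at hx
  | cons a l ih =>
    cases l with
    | nil => simp_all
    | cons b l =>
      rw [runBoundaries]
      split_ifs with hab
      · have hrep : ∀ u ∈ a :: b :: l, ∃ u' ∈ b :: l, f u' = f u := by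
          intro u hu
          rcases List.mem_cons.1 hu with rfl | hu
          · exact ⟨b, List.mem_cons_self, hab.symm⟩
          · exact ⟨u, hu, rfl⟩
        obtain ⟨x', hx', hfx⟩ := hrep x hx
        obtain ⟨y', hy', hfy⟩ := hrep y hy
        exact hfx ▸ ih hx' hy' (by rwa [hfx, hfy])
      · by_cases hxa : f x = f a
        · exact ⟨a, by simp, hxa.symm⟩
        · by_cases hxb : f x = f b
          · exact ⟨b, by simp, hxb.symm⟩
          · have hxl : x ∈ b :: l := List.mem_of_ne_of_mem (by grind) hx
            obtain ⟨z, hz, hzx⟩ := ih hxl List.mem_cons_self hxb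
            exact ⟨z, by simp [hz], hzx⟩

end Runs

section Intervals

variable {X L : Type*} {l : List X} {g : X → L} {s : Set L}

theorem ordConnected_setOf_prefix {A : Type*} [LinearOrder A] (p : List A) :
    {x | p <+: x}.OrdConnected := by
  induction p with
  | nil => simpa using Set.ordConnected_univ
  | cons a p ih =>
    refine ⟨?_⟩
    rintro _ ⟨x, rfl⟩ _ ⟨z, rfl⟩ y ⟨hxy, hyz⟩
    rcases y with _ | ⟨b, y⟩
    · exact absurd hxy (by simp)
    · rw [List.cons_append, ← not_lt, List.cons_lt_cons_iff, not_or] at hxy hyz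
      obtain rfl : a = b := le_antisymm (not_lt.1 hxy.1) (not_lt.1 hyz.1)
      simp only [true_and, not_lt] at hxy hyz
      have hpy : p <+: y := ih.out (List.prefix_append p x) (List.prefix_append p z) ⟨hxy.2, hyz.2⟩
      exact List.cons_prefix_cons.2 ⟨rfl, hpy⟩

theorem filter_prefix_of_pairwise {p : X → Prop} [DecidablePred p]
    (hl : l.Pairwise fun a b => p b → p a) : l.filter p <+: l := by
  induction l with
  | nil => exact List.prefix_rfl
  | cons a l ih =>
    obtain ⟨hal, hl⟩ := List.pairwise_cons.1 hl
    by_cases ha : p a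
    · rw [List.filter_cons_of_pos (by simpa using ha)]
      exact List.cons_prefix_cons.2 ⟨rfl, ih hl⟩
    · have hnone : (a :: l).filter p = [] := by
        simpa [List.filter_eq_nil_iff, ha] using fun b hb hpb => ha (hal b hb hpb)
      rw [hnone]
      exact List.nil_prefix

theorem filter_infix_of_ordConnected [Preorder L] [DecidablePred (· ∈ s)] (hs : s.OrdConnected)
    (hl : l.Pairwise (g · ≤ g ·)) : l.filter (g · ∈ s) <:+: l := by
  induction l with
  | nil => exact List.infix_rfl
  | cons a l ih =>
    obtain ⟨hal, hl⟩ := List.pairwise_cons.1 hl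
    by_cases ha : g a ∈ s
    · have hinitial : l.Pairwise fun b c => g c ∈ s → g b ∈ s :=
        hl.imp_of_mem fun hb _ hbc hc => hs.out ha hc ⟨hal _ hb, hbc⟩
      rw [List.filter_cons_of_pos (by simpa using ha)]
      exact (List.cons_prefix_cons.2 ⟨rfl, filter_prefix_of_pairwise hinitial⟩).isInfix
    · rw [List.filter_cons_of_neg (by simpa using ha)]
      exact List.infix_cons (ih hl)

end Intervals

section Rotations

variable {A : Type*} {T T' w : List A} {c e : A} {k : ℕ}

/-- The last character of the `k`-th rotation of `W`, which is the character that this rotation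
contributes to `BWT W`. -/
def bwtChar (W : List A) (k : ℕ) : Option A := (W.rotate k).getLast?

/-- The (1-based) position in a string `T` of length `n` of the last character of the `k`-th
rotation of `T.reverse`; this is `posOf`, taken at a rotation offset instead of its rank. -/
def textPos (n k : ℕ) : ℕ := (n - k) % n + 1

theorem one_le_textPos_and_textPos_le {n : ℕ} (hn : 0 < n) (k : ℕ) :
    1 ≤ textPos n k ∧ textPos n k ≤ n :=
  ⟨Nat.le_add_left _ _, Nat.mod_lt _ hn⟩

theorem rotate_reverse_mod_length (T : List A) (k : ℕ) :
    T.reverse.rotate (k % T.length) = T.reverse.rotate k := by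
  rw [← List.length_reverse, List.rotate_mod]

theorem rotate_reverse_append_cons (x y : List A) (c : A) :
    (x ++ c :: y).reverse.rotate (y.length + 1) = x.reverse ++ (y.reverse ++ [c]) := by
  have hrev : (x ++ c :: y).reverse = (y.reverse ++ [c]) ++ x.reverse := by simp
  have hlen : y.length + 1 = (y.reverse ++ [c]).length := by simp
  rw [hrev, hlen, List.rotate_append_length_eq]

theorem exists_split_of_lt_length (hk : k < T.length) :
    ∃ x c y, T = x ++ c :: y ∧ textPos T.length k = x.length + 1 ∧
      T.reverse.rotate k = x.reverse ++ (y.reverse ++ [c]) := by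
  set j := (T.length - k) % T.length with hj
  have hjT : j < T.length := Nat.mod_lt _ (by lia)
  have hsplit : T = T.take j ++ T[j] :: T.drop (j + 1) := by simp
  have hshift : ((T.drop (j + 1)).length + 1) % T.length = k := by
    rw [List.length_drop, show T.length - (j + 1) + 1 = T.length - j by lia]
    rcases k.eq_zero_or_pos with rfl | hk₀
    · simp [hj]
    · rw [Nat.mod_eq_of_lt (by lia)] at hj
      rw [hj, Nat.sub_sub_self hk.le, Nat.mod_eq_of_lt hk]
  refine ⟨T.take j, T[j], T.drop (j + 1), hsplit, ?_, ?_⟩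
  · rw [textPos, List.length_take_of_le hjT.le]
  · rw [← rotate_reverse_append_cons, ← hsplit, ← rotate_reverse_mod_length _ (_ + 1), hshift]

theorem exists_rotate_of_concat_infix (h : w ++ [c] <:+: T) :
    ∃ k < T.length, w.reverse <+: T.reverse.rotate k ∧ bwtChar T.reverse k = some c := by
  obtain ⟨u, v, rfl⟩ := h
  have hrot := rotate_reverse_append_cons (u ++ w) v c
  have hT : u ++ (w ++ [c]) ++ v = u ++ w ++ c :: v := by simp
  rw [hT]
  refine ⟨(v.length + 1) % (u ++ w ++ c :: v).length, Nat.mod_lt _ (by simp), ?_, ?_⟩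
  · rw [rotate_reverse_mod_length, hrot]
    simp
  · rw [bwtChar, rotate_reverse_mod_length, hrot, ← List.append_assoc,
      List.getLast?_concat]

theorem concat_suffix_take_textPos (hew : e ∉ w) (hk : k < (T' ++ [e]).length)
    (hw : w.reverse <+: (T' ++ [e]).reverse.rotate k)
    (hc : bwtChar (T' ++ [e]).reverse k = some c) :
    w ++ [c] <:+ (T' ++ [e]).take (textPos (T' ++ [e]).length k) := by
  obtain ⟨x, d, y, hT, hpos, hrot⟩ := exists_split_of_lt_length hk
  obtain rfl : d = c := by
    rw [bwtChar, hrot, ← List.append_assoc, List.getLast?_concat] at hc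
    exact Option.some.inj hc
  obtain ⟨r, hr⟩ : ∃ r, y.reverse ++ [d] = e :: r := by
    have hrev : e :: T'.reverse = (y.reverse ++ [d]) ++ x.reverse := by
      simpa using congrArg List.reverse hT
    rcases List.cons_eq_append_iff.1 hrev with ⟨h, -⟩ | ⟨r, hr, -⟩
    · simp at h
    · exact ⟨r, hr⟩
  have hwx : w <:+ x := by
    rw [hrot, hr] at hw
    exact List.reverse_prefix.1 (prefix_of_prefix_append_cons hw (by simpa using hew))
  have htake : (x ++ d :: y).take (x.length + 1) = x ++ [d] := by simp [List.take_append]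
  rw [hpos, hT, htake]
  exact List.suffix_append_self_iff.2 hwx

end Rotations

section BWT

variable {A : Type*} [LinearOrder A] {T T' : List A} {e : A} {k : ℕ}

theorem mem_sortedRotIdx {W : List A} : k ∈ sortedRotIdx W ↔ k < W.length := by
  rw [sortedRotIdx, List.mem_insertionSort, List.mem_range]

theorem pairwise_sortedRotIdx (W : List A) :
    (sortedRotIdx W).Pairwise (W.rotate · ≤ W.rotate ·) :=
  have : Std.Total fun a b => W.rotate a ≤ W.rotate b := ⟨fun _ _ => le_total _ _⟩
  have : IsTrans ℕ fun a b => W.rotate a ≤ W.rotate b := ⟨fun _ _ _ => le_trans⟩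
  List.pairwise_insertionSort _ _

theorem exists_mem_runBoundaries_sortedRotIdx {W p : List A} {i j : ℕ} (hi : i < W.length)
    (hj : j < W.length) (hpi : p <+: W.rotate i) (hpj : p <+: W.rotate j)
    (hij : bwtChar W i ≠ bwtChar W j) :
    ∃ k ∈ runBoundaries (bwtChar W) (sortedRotIdx W),
      p <+: W.rotate k ∧ bwtChar W k = bwtChar W i := by
  classical
  have hinfix := filter_infix_of_ordConnected (ordConnected_setOf_prefix p)
    (pairwise_sortedRotIdx W)
  obtain ⟨k, hk, hki⟩ := exists_mem_runBoundaries (f := bwtChar W)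
    (l := (sortedRotIdx W).filter (W.rotate · ∈ {x | p <+: x}))
    (List.mem_filter.2 ⟨mem_sortedRotIdx.2 hi, by simpa using hpi⟩)
    (List.mem_filter.2 ⟨mem_sortedRotIdx.2 hj, by simpa using hpj⟩) hij
  have hpk := (List.mem_filter.1 (runBoundaries_subset _ _ hk)).2
  exact ⟨k, runBoundaries_subset_of_infix _ hinfix hk, by simpa using hpk, hki⟩

/-- The positions of `T` corresponding to the characters at the borders between consecutive runs of
`BWT T.reverse`.  This is the suffixient set witnessing `χ ≤ 2·r̄`. -/
def bwtBoundaryPositions (T : List A) : Finset ℕ :=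
  ((runBoundaries (bwtChar T.reverse) (sortedRotIdx T.reverse)).map (textPos T.length)).toFinset

theorem card_bwtBoundaryPositions_add_two_le (hT : T ≠ []) :
    (bwtBoundaryPositions T).card + 2 ≤ 2 * runsCount (BWT T.reverse) := by
  have hsorted : sortedRotIdx T.reverse ≠ [] :=
    List.ne_nil_of_mem (mem_sortedRotIdx.2 (List.length_pos_iff.2 (by simpa using hT)))
  calc (bwtBoundaryPositions T).card + 2
      ≤ (runBoundaries (bwtChar T.reverse) (sortedRotIdx T.reverse)).length + 2 := by
        grw [bwtBoundaryPositions, List.toFinset_card_le, List.length_map]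
    _ = 2 * runsCount (BWT T.reverse) := length_runBoundaries_add_two _ hsorted

theorem isSuffixient_bwtBoundaryPositions (he : e ∉ T') :
    IsSuffixient (T' ++ [e]) (bwtBoundaryPositions (T' ++ [e])) := by
  set T := T' ++ [e] with hT
  refine ⟨fun s hs => ?_, fun w c hmax hwc => ?_⟩
  · obtain ⟨k, -, rfl⟩ := List.mem_map.1 (List.mem_toFinset.1 hs)
    exact one_le_textPos_and_textPos_le (by simp [hT]) k
  · have hew : e ∉ w := notMem_of_concat_infix_concat he hwc
    obtain ⟨c', hcc', hwc'⟩ := hmax.exists_ne c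
    obtain ⟨i, hi, hwi, hci⟩ := exists_rotate_of_concat_infix hwc
    obtain ⟨j, hj, hwj, hcj⟩ := exists_rotate_of_concat_infix hwc'
    obtain ⟨k, hk, hwk, hki⟩ := exists_mem_runBoundaries_sortedRotIdx (by simpa using hi)
      (by simpa using hj) hwi hwj (by simpa [hci, hcj] using hcc')
    have hkT : k < T.length := by
      simpa using mem_sortedRotIdx.1 (runBoundaries_subset _ _ hk)
    exact ⟨textPos T.length k, List.mem_toFinset.2 (List.mem_map_of_mem hk),
      concat_suffix_take_textPos hew hkT hwk (hki.trans hci)⟩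

end BWT

/-- `γ ≤ χ ≤ 2·r̄`, where `γ` is the minimum cardinality of a string attractor for `T`,
`χ` the minimum cardinality of a suffixient set for `T`, and `r̄` the number of runs
of `BWT(reverse T)`. -/
theorem gamma_le_chi_le_two_rbar {A : Type*} [LinearOrder A] (T : List A)
    (hne : T ≠ []) (hn : 2 ≤ T.length)
    (hlast : T.count (T.getLast hne) = 1) :
    sInf {k : ℕ | ∃ Γ : Finset ℕ, IsAttractor T Γ ∧ Γ.card = k} ≤
      sInf {k : ℕ | ∃ S : Finset ℕ, IsSuffixient T S ∧ S.card = k} ∧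
    sInf {k : ℕ | ∃ S : Finset ℕ, IsSuffixient T S ∧ S.card = k} ≤
      2 * runsCount (BWT T.reverse) := by
  obtain ⟨T', e, rfl⟩ : ∃ T' e, T = T' ++ [e] := ⟨_, _, (List.dropLast_append_getLast hne).symm⟩
  have he : e ∉ T' := by simpa [List.count_eq_zero] using hlast
  have hT' : T' ≠ [] := by rintro rfl; simp at hn
  have hS := isSuffixient_bwtBoundaryPositions he
  constructor
  · refine csInf_le_csInf (OrderBot.bddBelow _) ⟨_, _, hS, rfl⟩ ?_
    rintro _ ⟨S, hS, rfl⟩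
    exact ⟨S, hS.isAttractor he hT', rfl⟩
  · have hcard := card_bwtBoundaryPositions_add_two_le hne
    exact le_trans (Nat.sInf_le ⟨_, hS, rfl⟩) (by lia)
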